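/- arXiv:1301.4578 — 3 statements merged into one kernel-verified Lean document; each statement's English description precedes it below -/
import Mathlib

section
/- Let (X,d) be a generalized cone rectangular metric space with weight s ≥ 1 over a solid cone P in a real Banach space E, let T : X → X, and let φ : P → P be a weak distance altering function. Suppose μ, α, β, γ ≥ 0 are reals with μ + α + β < 1 and φ(d(Tx,Ty)) ≤ μ·φ(d(x,y)) + α·φ(d(x,Tx)) + β·φ(d(y,Ty)) + γ·φ(d(y,Tx)) for all x, y ∈ X. Set δ = (μ + α)/(1 − β). Then for every x ∈ X and every n ∈ ℕ, φ(d(Tⁿx, Tⁿ⁺¹x)) ≤ δⁿ·φ(d(x,Tx)). -/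
open Set Filter

variable {E : Type*} [NormedAddCommGroup E] [NormedSpace ℝ E] [CompleteSpace E]

/-- A cone in a real Banach space: a nonempty closed subset `P` with
`P + P ⊆ P`, `α • P ⊆ P` for all `α ≥ 0`, and `P ∩ (-P) = {0}`. -/
def IsCone (P : Set E) : Prop :=
  P.Nonempty ∧ IsClosed P ∧
  (∀ x ∈ P, ∀ y ∈ P, x + y ∈ P) ∧
  (∀ α : ℝ, 0 ≤ α → ∀ x ∈ P, α • x ∈ P) ∧
  P ∩ (-P) = {0}

/-- The partial order induced by the cone `P` : `x ≤ y` iff `y - x ∈ P`. -/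
def ConeLe (P : Set E) (x y : E) : Prop := y - x ∈ P

/-- `x ≪ y` iff `y - x ∈ int P`. -/
def ConeLt (P : Set E) (x y : E) : Prop := y - x ∈ interior P

/-- A weak distance altering function `φ` for the cone `P`
(given as a self-map of `E` mapping `P` into `P`):
(i) subadditive on `P`, (ii) `φ x ≤ φ y ↔ x ≤ y` on `P`,
(iii) `φ (η • x) ≥ η • φ x` for `0 ≤ η ≤ 1`,
(iv) it preserves the weak convergence to `0` of sequences in `P`. -/
def IsWeakDistanceAltering (P : Set E) (φ : E → E) : Prop :=
  (∀ a ∈ P, φ a ∈ P) ∧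
  (∀ x ∈ P, ∀ y ∈ P, ConeLe P (φ (x + y)) (φ x + φ y)) ∧
  (∀ x ∈ P, ∀ y ∈ P, (ConeLe P (φ x) (φ y) ↔ ConeLe P x y)) ∧
  (∀ x ∈ P, ∀ η : ℝ, 0 ≤ η → η ≤ 1 → ConeLe P (η • φ x) (φ (η • x))) ∧
  (∀ a : ℕ → E, (∀ n, a n ∈ P) →
    (∀ c : E, ConeLt P 0 c → ∃ N : ℕ, ∀ n ≥ N, ConeLt P (a n) c) →
    ∀ c : E, ConeLt P 0 c → ∃ M : ℕ, ∀ n ≥ M, ConeLt P (φ (a n)) c)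

/-- A generalized cone rectangular metric on `X` with weight `s`:
`d x y ∈ P`, `d x y = 0 ↔ x = y`, and the rectangular inequality
`d x y ≤ d x u + s • d u v + d v y` for distinct `u v ∈ X \ {x, y}`. -/
def IsGCRMetric {X : Type*} (P : Set E) (d : X → X → E) (s : ℕ) : Prop :=
  (∀ x y : X, d x y ∈ P) ∧
  (∀ x y : X, d x y = 0 ↔ x = y) ∧
  (∀ x y u v : X, u ≠ v → u ≠ x → u ≠ y → v ≠ x → v ≠ y →
    ConeLe P (d x y) (d x u + (s : ℝ) • d u v + d v y))

/-- A sequence is Cauchy for the generalized cone rectangular metric `d`. -/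
def IsConeCauchy {X : Type*} (P : Set E) (d : X → X → E) (x : ℕ → X) : Prop :=
  ∀ c : E, ConeLt P 0 c → ∃ N : ℕ, ∀ n ≥ N, ∀ k ≥ 1, ConeLt P (d (x n) (x (n + k))) c

/-- A sequence converges weakly to `l`. -/
def ConvergesWeaklyTo {X : Type*} (P : Set E) (d : X → X → E) (x : ℕ → X) (l : X) : Prop :=
  ∀ c : E, ConeLt P 0 c → ∃ N : ℕ, ∀ n ≥ N, ConeLt P (d (x n) l) c

/-- `(X, d)` is weakly complete: every Cauchy sequence converges weakly. -/
def WeaklyComplete {X : Type*} (P : Set E) (d : X → X → E) : Prop :=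
  ∀ x : ℕ → X, IsConeCauchy P d x → ∃ l : X, ConvergesWeaklyTo P d x l

/-!
Condition (iv), applied to the constant sequence `0`, gives `φ 0 ≪ c` for every `c ≫ 0`, so
`φ 0 ≤ 0` since `P` is closed, and hence `φ 0 = 0`. Taking `y = T x` in the contractive condition
therefore kills the `γ` term; moving the `β` term to the left gives
`φ (d (T x) (T (T x))) ≤ δ • φ (d x (T x))` with `δ = (μ + α) / (1 - β)`, which is then iterated.
-/

section

variable {F : Type*} [NormedAddCommGroup F] [NormedSpace ℝ F]

/-- The bundled Mathlib cone underlying a cone `P` in the sense of `IsCone`, which forgets that `P`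
is closed and salient. Its coercion to `Set F` is `P` by definition. -/
def IsCone.toPointedCone {P : Set F} (hP : IsCone P) : PointedCone ℝ F where
  carrier := P
  zero_mem' := (hP.2.2.2.2.ge (mem_singleton 0)).1
  add_mem' hx hy := hP.2.2.1 _ hx _ hy
  smul_mem' r _ hx := hP.2.2.2.1 r r.2 _ hx

namespace ConeLe

variable {C : PointedCone ℝ F} {x y z : F}

protected theorem refl (x : F) : ConeLe (C : Set F) x x := by
  simp [ConeLe]

protected theorem trans (hxy : ConeLe (C : Set F) x y) (hyz : ConeLe (C : Set F) y z) :
    ConeLe (C : Set F) x z := by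
  simpa [ConeLe] using C.add_mem hyz hxy

protected theorem smul {r : ℝ} (hr : 0 ≤ r) (hxy : ConeLe (C : Set F) x y) :
    ConeLe (C : Set F) (r • x) (r • y) := by
  simpa only [ConeLe, smul_sub, SetLike.mem_coe] using C.smul_mem hr hxy

theorem of_forall_coneLt_coneLe (hclosed : IsClosed (C : Set F))
    (hsolid : (interior (C : Set F)).Nonempty)
    (h : ∀ c, ConeLt (C : Set F) y c → ConeLe (C : Set F) x c) :
    ConeLe (C : Set F) x y := by
  have zero_mem_closure : (0 : F) ∈ closure (interior (C : Set F)) := by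
    rw [C.convex.closure_interior_eq_closure_of_nonempty_interior hsolid]
    exact subset_closure C.zero_mem
  have mapsTo : MapsTo (fun c => y + c - x) (interior (C : Set F)) C := fun c hc =>
    h (y + c) (by simpa [ConeLt] using hc)
  have mem_closure := map_mem_closure (by fun_prop) zero_mem_closure mapsTo
  simpa [ConeLe, hclosed.closure_eq] using mem_closure

theorem div_smul_of_le_smul_add_smul_self {κ β : ℝ} (hβ : β < 1)
    (h : ConeLe (C : Set F) x (κ • y + β • x)) :
    ConeLe (C : Set F) x ((κ / (1 - β)) • y) := by
  have hβ' : 0 < 1 - β := sub_pos.2 hβ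
  have absorbed : ConeLe (C : Set F) ((1 - β) • x) (κ • y) := by
    unfold ConeLe at h ⊢
    convert h using 1
    module
  simpa [smul_smul, hβ'.ne', div_eq_inv_mul] using absorbed.smul (inv_nonneg.2 hβ'.le)

theorem pow_smul_of_succ_le_smul {δ : ℝ} (hδ : 0 ≤ δ) {a : ℕ → F}
    (h : ∀ n, ConeLe (C : Set F) (a (n + 1)) (δ • a n)) (n : ℕ) :
    ConeLe (C : Set F) (a n) (δ ^ n • a 0) := by
  induction n with
  | zero => simpa using ConeLe.refl (a 0)
  | succ n ih => simpa only [pow_succ', mul_smul] using (h n).trans (ih.smul hδ)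

end ConeLe

theorem IsWeakDistanceAltering.map_zero {P : Set F} {φ : F → F}
    (hφ : IsWeakDistanceAltering P φ) (hP : IsCone P) (hsolid : (interior P).Nonempty) :
    φ 0 = 0 := by
  have ⟨_, isClosed, _, _, inter_neg⟩ := hP
  obtain ⟨maps_cone, -, -, -, preserves_null⟩ := hφ
  have zero_mem : (0 : F) ∈ P := hP.toPointedCone.zero_mem
  have map_zero_le : ConeLe P (φ 0) 0 :=
    ConeLe.of_forall_coneLt_coneLe (C := hP.toPointedCone) isClosed hsolid fun c hc =>
      have ⟨M, hM⟩ := preserves_null (fun _ => 0) (fun _ => zero_mem)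
        (fun _ hc' => ⟨0, fun _ _ => hc'⟩) c hc
      interior_subset (hM M le_rfl)
  exact inter_neg.le ⟨maps_cone 0 zero_mem, by simpa [ConeLe] using map_zero_le⟩

theorem iterate_distance_bound_general {X : Type*} (C : PointedCone ℝ F)
    {d : X → X → F} (hd : ∀ x, d x x = 0) {T : X → X} {φ : F → F} (hφ : φ 0 = 0)
    {μ α β γ : ℝ} (hμα : 0 ≤ μ + α) (hβ : β < 1)
    (hcontr : ∀ x y : X, ConeLe (C : Set F) (φ (d (T x) (T y)))
      (μ • φ (d x y) + α • φ (d x (T x)) + β • φ (d y (T y)) + γ • φ (d y (T x))))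
    (x : X) (n : ℕ) :
    ConeLe (C : Set F) (φ (d (T^[n] x) (T^[n + 1] x)))
      (((μ + α) / (1 - β)) ^ n • φ (d x (T x))) := by
  have orbit_step (y : X) : ConeLe (C : Set F) (φ (d (T y) (T (T y))))
      (((μ + α) / (1 - β)) • φ (d y (T y))) :=
    ConeLe.div_smul_of_le_smul_add_smul_self hβ
      (by simpa only [hd, hφ, smul_zero, add_zero, ← add_smul] using hcontr y (T y))
  refine ConeLe.pow_smul_of_succ_le_smul (a := fun k => φ (d (T^[k] x) (T^[k + 1] x)))
    (div_nonneg hμα (sub_nonneg.2 hβ.le)) (fun k => ?_) n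
  simpa only [Function.iterate_succ_apply'] using orbit_step (T^[k] x)

end

theorem iterate_distance_bound {X : Type*}
    (P : Set E) (hP : IsCone P) (hsolid : (interior P).Nonempty)
    (d : X → X → E) (s : ℕ) (hs : 1 ≤ s) (hd : IsGCRMetric P d s)
    (T : X → X) (φ : E → E) (hφ : IsWeakDistanceAltering P φ)
    (μ α β γ : ℝ) (hμ : 0 ≤ μ) (hα : 0 ≤ α) (hβ : 0 ≤ β) (hγ : 0 ≤ γ)
    (hsum : μ + α + β < 1)
    (hcontr : ∀ x y : X, ConeLe P (φ (d (T x) (T y)))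
      (μ • φ (d x y) + α • φ (d x (T x)) + β • φ (d y (T y)) + γ • φ (d y (T x)))) :
    ∀ x : X, ∀ n : ℕ,
      ConeLe P (φ (d (T^[n] x) (T^[n + 1] x)))
        (((μ + α) / (1 - β)) ^ n • φ (d x (T x))) :=
  iterate_distance_bound_general hP.toPointedCone (fun x => (hd.2.1 x x).2 rfl)
    (hφ.map_zero hP hsolid) (add_nonneg hμ hα) (by linarith) hcontr
end

section
/- Let (X,d) be a generalized cone rectangular metric space with weight s ≥ 1 over a solid cone P in a real Banach space E, let T : X → X, and let φ : P → P be a weak distance altering function. Suppose μ, α, β, γ ≥ 0 are reals with μ + α + β < 1 and φ(d(Tx,Ty)) ≤ μ·φ(d(x,y)) + α·φ(d(x,Tx)) + β·φ(d(y,Ty)) + γ·φ(d(y,Tx)) for all x, y ∈ X. If for some x ∈ X and natural numbers m > n one has Tᵐx = Tⁿx, then Tⁿx is a fixed point of T. -/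
open Set Filter

variable {E : Type*} [NormedAddCommGroup E] [NormedSpace ℝ E] [CompleteSpace E]

/-!
Put `D x y = φ (d x y)`. Since `D (T x) (T x) = 0`, the contraction inequality at the pair
`(x, T x)` loses its `γ`-term and gives `D (T x) (T (T x)) ≤ L • D x (T x)` with
`L = (μ + α) / (1 - β) < 1`. So `D y (T y)` decays geometrically along orbits; on a periodic orbit
it also returns to its starting value and therefore vanishes.
-/

section OrderedModule

open Function

variable {𝕜 F X : Type*}

theorem iterate_le_pow_smul [MonoidWithZero 𝕜] [Preorder 𝕜] [Preorder F] [MulAction 𝕜 F]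
    [PosSMulMono 𝕜 F] {f : X → F} {T : X → X} {L : 𝕜} (hL : 0 ≤ L)
    (hf : ∀ x, f (T x) ≤ L • f x) (k : ℕ) (x : X) : f (T^[k] x) ≤ L ^ k • f x := by
  induction k with
  | zero => simp
  | succ k ih =>
    calc f (T^[k + 1] x) = f (T (T^[k] x)) := by rw [iterate_succ_apply']
      _ ≤ L • f (T^[k] x) := hf _
      _ ≤ L • L ^ k • f x := smul_le_smul_of_nonneg_left ih hL
      _ = L ^ (k + 1) • f x := by rw [smul_smul, pow_succ']

theorem iterate_mem_periodicPts_of_iterate_eq {T : X → X} {x : X} {m n : ℕ} (hnm : n < m)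
    (h : T^[m] x = T^[n] x) : T^[n] x ∈ periodicPts T := by
  refine mk_mem_periodicPts (Nat.sub_pos_of_lt hnm) ?_
  rw [IsPeriodicPt, IsFixedPt, ← iterate_add_apply, Nat.sub_add_cancel hnm.le, h]

variable [Field 𝕜] [LinearOrder 𝕜] [IsStrictOrderedRing 𝕜] [AddCommGroup F] [PartialOrder F]
  [IsOrderedAddMonoid F] [Module 𝕜 F] [PosSMulMono 𝕜 F]

theorem le_div_one_sub_smul_of_le_smul_add_smul {a b : 𝕜} {u v : F} (hb : b < 1)
    (h : u ≤ a • v + b • u) : u ≤ (a / (1 - b)) • v := by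
  have hu : (1 - b) • u ≤ a • v := by
    rwa [sub_smul, one_smul, sub_le_iff_le_add]
  rwa [div_eq_inv_mul, mul_smul, le_inv_smul_iff_of_pos (sub_pos.2 hb)]

theorem nonpos_of_le_smul_self {r : 𝕜} {a : F} (hr : r < 1) (h : a ≤ r • a) : a ≤ 0 := by
  simpa using le_div_one_sub_smul_of_le_smul_add_smul (a := 0) (v := a) hr (by simpa using h)

theorem nonpos_of_mem_periodicPts {f : X → F} {T : X → X} {L : 𝕜} (hL₀ : 0 ≤ L) (hL₁ : L < 1)
    (hf : ∀ x, f (T x) ≤ L • f x) {y : X} (hy : y ∈ periodicPts T) : f y ≤ 0 := by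
  obtain ⟨p, hp, hper⟩ := mem_periodicPts.1 hy
  have hreturn : f y ≤ L ^ p • f y := by
    simpa only [hper.eq] using iterate_le_pow_smul hL₀ hf p y
  exact nonpos_of_le_smul_self (pow_lt_one₀ hL₀ hL₁ hp.ne') hreturn

theorem periodic_point_is_fixed_general {D : X → X → F} (hD_nonneg : ∀ x y, 0 ≤ D x y)
    (hD_eq_zero : ∀ x y, D x y = 0 ↔ x = y) {T : X → X} {μ α β γ : 𝕜}
    (hμ : 0 ≤ μ) (hα : 0 ≤ α) (hsum : μ + α + β < 1)
    (hcontr : ∀ x y, D (T x) (T y) ≤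
      μ • D x y + α • D x (T x) + β • D y (T y) + γ • D y (T x))
    {y : X} (hy : y ∈ periodicPts T) : IsFixedPt T y := by
  have hμα : 0 ≤ μ + α := add_nonneg hμ hα
  have hβ : β < 1 := by linarith
  have hL₀ : 0 ≤ (μ + α) / (1 - β) := div_nonneg hμα (sub_pos.2 hβ).le
  have hL₁ : (μ + α) / (1 - β) < 1 := (div_lt_one (sub_pos.2 hβ)).2 (by linarith)
  have hdecay (x : X) : D (T x) (T (T x)) ≤ ((μ + α) / (1 - β)) • D x (T x) := by
    refine le_div_one_sub_smul_of_le_smul_add_smul hβ ?_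
    simpa only [(hD_eq_zero (T x) (T x)).2 rfl, smul_zero, add_zero, ← add_smul]
      using hcontr x (T x)
  have hzero : D y (T y) = 0 :=
    (nonpos_of_mem_periodicPts (f := fun x => D x (T x)) hL₀ hL₁ hdecay hy).antisymm
      (hD_nonneg y (T y))
  exact ((hD_eq_zero y (T y)).1 hzero).symm

end OrderedModule

section Cone

variable {V : Type*} [NormedAddCommGroup V] [NormedSpace ℝ V] {P : Set V}

namespace IsCone

theorem isClosed (hP : IsCone P) : IsClosed P :=
  hP.2.1

theorem add_mem (hP : IsCone P) {a b : V} (ha : a ∈ P) (hb : b ∈ P) : a + b ∈ P :=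
  hP.2.2.1 a ha b hb

theorem smul_mem (hP : IsCone P) {r : ℝ} (hr : 0 ≤ r) {a : V} (ha : a ∈ P) : r • a ∈ P :=
  hP.2.2.2.1 r hr a ha

theorem zero_mem (hP : IsCone P) : (0 : V) ∈ P :=
  (hP.2.2.2.2.symm.subset rfl).1

theorem eq_zero_of_neg_mem (hP : IsCone P) {a : V} (ha : a ∈ P) (hna : -a ∈ P) : a = 0 :=
  hP.2.2.2.2.subset ⟨ha, hna⟩

theorem convex (hP : IsCone P) : Convex ℝ P :=
  fun _ hx _ hy _ _ hr ht _ => hP.add_mem (hP.smul_mem hr hx) (hP.smul_mem ht hy)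

/-- The cone as a cone of the additive group of the space, the form from which
`PartialOrder.mkOfAddGroupCone` builds an order. -/
def toAddGroupCone (hP : IsCone P) : AddGroupCone V where
  carrier := P
  add_mem' := hP.add_mem
  zero_mem' := hP.zero_mem
  eq_zero_of_mem_of_neg_mem' := hP.eq_zero_of_neg_mem

/-- The relation `ConeLe P` as a `PartialOrder`, which makes Mathlib's ordered modules available.
It depends on `P`, so it is introduced locally rather than as a global instance. -/
abbrev partialOrder (hP : IsCone P) : PartialOrder V :=
  .mkOfAddGroupCone hP.toAddGroupCone

theorem isOrderedAddMonoid (hP : IsCone P) :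
    let _ := hP.partialOrder
    IsOrderedAddMonoid V :=
  .mkOfCone hP.toAddGroupCone

theorem nonneg_iff_mem (hP : IsCone P) {a : V} :
    let _ := hP.partialOrder
    0 ≤ a ↔ a ∈ P := by
  change a - 0 ∈ P ↔ a ∈ P
  rw [sub_zero]

theorem posSMulMono (hP : IsCone P) :
    let _ := hP.partialOrder
    PosSMulMono ℝ V :=
  let _ := hP.partialOrder
  have := hP.isOrderedAddMonoid
  .of_smul_nonneg fun _ hr _ ha =>
    hP.nonneg_iff_mem.2 (hP.smul_mem hr (hP.nonneg_iff_mem.1 ha))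

theorem eq_zero_of_forall_coneLt (hP : IsCone P) (hsolid : (interior P).Nonempty) {a : V}
    (ha : a ∈ P) (h : ∀ c, ConeLt P 0 c → ConeLt P a c) : a = 0 := by
  have hclosed : IsClosed {c | c - a ∈ P} := hP.isClosed.preimage (continuous_sub_right a)
  have hinterior : interior P ⊆ {c | c - a ∈ P} := fun c hc => by
    have hac : ConeLt P a c := h c (by rwa [ConeLt, sub_zero])
    exact interior_subset (s := P) hac
  have hzero : (0 : V) ∈ closure (interior P) := by
    rw [hP.convex.closure_interior_eq_closure_of_nonempty_interior hsolid]
    exact subset_closure hP.zero_mem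
  have hneg : 0 - a ∈ P := closure_minimal hinterior hclosed hzero
  exact hP.eq_zero_of_neg_mem ha (by rwa [zero_sub] at hneg)

end IsCone

namespace IsWeakDistanceAltering

variable {φ : V → V}

theorem map_mem (hφ : IsWeakDistanceAltering P φ) {a : V} (ha : a ∈ P) : φ a ∈ P :=
  hφ.1 a ha

theorem map_coneLe_map_iff (hφ : IsWeakDistanceAltering P φ) {a b : V} (ha : a ∈ P) (hb : b ∈ P) :
    ConeLe P (φ a) (φ b) ↔ ConeLe P a b :=
  hφ.2.2.1 a ha b hb

theorem map_zero_s12 (hφ : IsWeakDistanceAltering P φ) (hP : IsCone P)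
    (hsolid : (interior P).Nonempty) : φ 0 = 0 := by
  have ⟨_, _, _, _, hconv⟩ := hφ
  refine hP.eq_zero_of_forall_coneLt hsolid (hφ.map_mem hP.zero_mem) fun c hc => ?_
  obtain ⟨M, hM⟩ := hconv (fun _ => 0) (fun _ => hP.zero_mem) (fun _ hb => ⟨0, fun _ _ => hb⟩) c hc
  exact hM M le_rfl

theorem map_eq_zero_iff (hφ : IsWeakDistanceAltering P φ) (hP : IsCone P)
    (hsolid : (interior P).Nonempty) {a : V} (ha : a ∈ P) : φ a = 0 ↔ a = 0 := by
  have hφ₀ : φ 0 = 0 := hφ.map_zero_s12 hP hsolid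
  refine ⟨fun h => ?_, fun h => h ▸ hφ₀⟩
  have hle : ConeLe P a 0 := by
    rw [← hφ.map_coneLe_map_iff ha hP.zero_mem, h, hφ₀, ConeLe, sub_zero]
    exact hP.zero_mem
  exact hP.eq_zero_of_neg_mem ha (by rwa [ConeLe, zero_sub] at hle)

end IsWeakDistanceAltering

end Cone

theorem periodic_point_is_fixed {X : Type*}
    (P : Set E) (hP : IsCone P) (hsolid : (interior P).Nonempty)
    (d : X → X → E) (s : ℕ) (hs : 1 ≤ s) (hd : IsGCRMetric P d s)
    (T : X → X) (φ : E → E) (hφ : IsWeakDistanceAltering P φ)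
    (μ α β γ : ℝ) (hμ : 0 ≤ μ) (hα : 0 ≤ α) (hβ : 0 ≤ β) (hγ : 0 ≤ γ)
    (hsum : μ + α + β < 1)
    (hcontr : ∀ x y : X, ConeLe P (φ (d (T x) (T y)))
      (μ • φ (d x y) + α • φ (d x (T x)) + β • φ (d y (T y)) + γ • φ (d y (T x)))) :
    ∀ x : X, ∀ m n : ℕ, m > n → T^[m] x = T^[n] x →
      T (T^[n] x) = T^[n] x := by
  let _ := hP.partialOrder
  have := hP.isOrderedAddMonoid
  have := hP.posSMulMono
  intro x m n hnm hiter
  exact periodic_point_is_fixed_general (D := fun x y => φ (d x y))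
    (fun x y => hP.nonneg_iff_mem.2 (hφ.map_mem (hd.1 x y)))
    (fun x y => (hφ.map_eq_zero_iff hP hsolid (hd.1 x y)).trans (hd.2.1 x y))
    hμ hα hsum hcontr (iterate_mem_periodicPts_of_iterate_eq hnm hiter)
end

section
/- Let E = ℝ with the solid cone P = [0,∞), and let (X,d) be a weakly complete generalized cone rectangular metric space with weight s ≥ 1 over P (so d is real-valued and nonnegative). Let t be a real number with 0 < t ≤ 1 and let α be a real number with 0 ≤ α < 1/2. If T : X → X satisfies d(Tx,Ty)^t ≤ α·(d(Tx,x)^t + d(Ty,y)^t) for all x, y ∈ X, then T has a unique fixed point. -/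
open Set Filter

variable {E : Type*} [NormedAddCommGroup E] [NormedSpace ℝ E] [CompleteSpace E]

/-!
Write `e x y = φ (d x y)`. Along an orbit the displacement `e (T x) x` shrinks by the factor
`α / (1 - α) < 1` at each step, and `e (T^[m + 1] x) (T^[n + 1] x)` is at most `α` times the sum of
two displacements, so an orbit without a fixed point is injective and Cauchy. If `l` is its limit,
the rectangular inequality through two consecutive points of the orbit gives
`d (T l) l ≤ d (T l) (T^[n + 1] x) + o(1)`. Passing to the limit in this inequality for `d`, and
using only continuity and monotonicity of `φ`, yields `e (T l) l ≤ α * e (T l) l`, so `T l = l`.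
-/

open Function Topology

lemma coneLt_Ici_iff {a b : ℝ} : ConeLt (Ici 0) a b ↔ a < b := by
  simp [ConeLt]

lemma isConeCauchy_Ici_iff {X : Type*} {d : X → X → ℝ} {x : ℕ → X} :
    IsConeCauchy (Ici 0) d x ↔
      ∀ c > 0, ∃ N, ∀ n ≥ N, ∀ k ≥ 1, d (x n) (x (n + k)) < c := by
  simp only [IsConeCauchy, coneLt_Ici_iff, gt_iff_lt]

lemma convergesWeaklyTo_Ici_iff_tendsto {X : Type*} {d : X → X → ℝ} (hd : ∀ x y, 0 ≤ d x y)
    {x : ℕ → X} {l : X} :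
    ConvergesWeaklyTo (Ici 0) d x l ↔ Tendsto (fun n ↦ d (x n) l) atTop (𝓝 0) := by
  simp [ConvergesWeaklyTo, coneLt_Ici_iff, Metric.tendsto_atTop, abs_of_nonneg (hd _ _)]

lemma IsConeCauchy.tendsto_succ {X : Type*} {d : X → X → ℝ} {x : ℕ → X}
    (hx : IsConeCauchy (Ici 0) d x) (hd : ∀ x y, 0 ≤ d x y) :
    Tendsto (fun n ↦ d (x n) (x (n + 1))) atTop (𝓝 0) := by
  refine Metric.tendsto_atTop.2 fun c hc ↦ ?_
  obtain ⟨N, hN⟩ := isConeCauchy_Ici_iff.1 hx c hc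
  refine ⟨N, fun n hn ↦ ?_⟩
  simpa [abs_of_nonneg (hd _ _)] using hN n hn 1 le_rfl

lemma div_one_sub_lt_one {α : ℝ} (hα : α < 1 / 2) : α / (1 - α) < 1 := by
  rw [div_lt_one] <;> linarith

/-- Altering distance functions in the sense of Khan, Swaleh and Sessa: the class of rescalings of a
metric for which the contraction principle below holds. They are encoded as total functions on `ℝ`
of which only the restriction to `[0, ∞)` matters. -/
structure IsAlteringDistance (φ : ℝ → ℝ) : Prop where
  continuousOn : ContinuousOn φ (Ici 0)
  monotoneOn : MonotoneOn φ (Ici 0)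
  eq_zero_iff : ∀ r, 0 ≤ r → (φ r = 0 ↔ r = 0)

/-- Kannan contractions with constant `α`: the analogue of contractions in which the distance of two
images is controlled by the displacements of the two points. Here `e` is an arbitrary real
function, since it is applied to rescalings `φ (d x y)` of a distance. -/
def IsKannanWith {X : Type*} (α : ℝ) (e : X → X → ℝ) (T : X → X) : Prop :=
  ∀ x y, e (T x) (T y) ≤ α * (e (T x) x + e (T y) y)

namespace IsAlteringDistance

variable {φ : ℝ → ℝ} {r : ℝ}

lemma rpow {t : ℝ} (ht : 0 < t) : IsAlteringDistance (· ^ t) where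
  continuousOn := (Real.continuous_rpow_const ht.le).continuousOn
  monotoneOn := Real.monotoneOn_rpow_Ici_of_exponent_nonneg ht.le
  eq_zero_iff _ hr := Real.rpow_eq_zero hr ht.ne'

lemma map_zero (hφ : IsAlteringDistance φ) : φ 0 = 0 :=
  (hφ.eq_zero_iff 0 le_rfl).2 rfl

lemma nonneg (hφ : IsAlteringDistance φ) (hr : 0 ≤ r) : 0 ≤ φ r :=
  hφ.map_zero.symm.trans_le (hφ.monotoneOn self_mem_Ici hr hr)

lemma pos (hφ : IsAlteringDistance φ) (hr : 0 < r) : 0 < φ r :=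
  (hφ.nonneg hr.le).lt_of_ne' fun h ↦ hr.ne' ((hφ.eq_zero_iff r hr.le).1 h)

lemma eq_zero_of_le_zero (hφ : IsAlteringDistance φ) (hr : 0 ≤ r) (h : φ r ≤ 0) : r = 0 :=
  (hφ.eq_zero_iff r hr).1 (h.antisymm (hφ.nonneg hr))

lemma map_le_of_tendsto {ι : Type*} {l : Filter ι} [l.NeBot] (hφ : IsAlteringDistance φ)
    {y b c : ι → ℝ} {C : ℝ} (hr : 0 ≤ r) (hy : ∀ i, 0 ≤ y i) (hb : Tendsto b l (𝓝 0))
    (hc : Tendsto c l (𝓝 C)) (hrb : ∀ᶠ i in l, r ≤ y i + b i) (hyc : ∀ᶠ i in l, φ (y i) ≤ c i) :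
    φ r ≤ C := by
  have hmem (i : ι) : max 0 (r - b i) ∈ Ici (0 : ℝ) := mem_Ici.2 (le_max_left _ _)
  have hmax : Tendsto (fun i ↦ max 0 (r - b i)) l (𝓝[Ici 0] r) := by
    refine tendsto_nhdsWithin_iff.2 ⟨?_, .of_forall hmem⟩
    simpa [hr] using (tendsto_const_nhds (x := (0 : ℝ))).max (hb.const_sub r)
  refine le_of_tendsto_of_tendsto ((hφ.continuousOn r hr).tendsto.comp hmax) hc ?_
  filter_upwards [hrb, hyc] with i hri hyi
  have hle : max 0 (r - b i) ≤ y i := max_le (hy i) (by linarith)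
  exact (hφ.monotoneOn (hmem i) (hy i) hle).trans hyi

end IsAlteringDistance

namespace IsKannanWith

variable {X : Type*} {α : ℝ} {e : X → X → ℝ} {T : X → X}

lemma apply_le_zero_of_isFixedPt (hT : IsKannanWith α e T) (he : ∀ x, e x x = 0) {u v : X}
    (hu : IsFixedPt T u) (hv : IsFixedPt T v) : e u v ≤ 0 := by
  simpa [hu.eq, hv.eq, he] using hT u v

lemma displacement_map_le (hT : IsKannanWith α e T) (hα : α < 1) (x : X) :
    e (T (T x)) (T x) ≤ α / (1 - α) * e (T x) x := by
  rw [div_mul_eq_mul_div, le_div_iff₀ (sub_pos.2 hα)]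
  linarith [hT (T x) x]

lemma displacement_iterate_le (hT : IsKannanWith α e T) (hα0 : 0 ≤ α) (hα : α < 1) (x : X)
    (n : ℕ) : e (T (T^[n] x)) (T^[n] x) ≤ (α / (1 - α)) ^ n * e (T x) x := by
  refine le_geom (u := fun k ↦ e (T (T^[k] x)) (T^[k] x)) (div_nonneg hα0 (sub_pos.2 hα).le) n
    fun k _ ↦ ?_
  simpa only [iterate_succ_apply'] using hT.displacement_map_le hα (T^[k] x)

lemma tendsto_displacement_iterate (hT : IsKannanWith α e T) (he : ∀ x y, 0 ≤ e x y)
    (hα0 : 0 ≤ α) (hα : α < 1 / 2) (x : X) :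
    Tendsto (fun n ↦ e (T (T^[n] x)) (T^[n] x)) atTop (𝓝 0) := by
  have hα1 : α < 1 := by linarith
  have hpow := tendsto_pow_atTop_nhds_zero_of_lt_one (div_nonneg hα0 (sub_pos.2 hα1).le)
    (div_one_sub_lt_one hα)
  refine squeeze_zero (fun _ ↦ he _ _) (hT.displacement_iterate_le hα0 hα1 x) ?_
  simpa using hpow.mul_const (e (T x) x)

lemma injective_iterate (hT : IsKannanWith α e T) (hα : α < 1 / 2) {x : X}
    (hpos : ∀ n, 0 < e (T (T^[n] x)) (T^[n] x)) : Injective fun n ↦ T^[n] x := by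
  have hanti : StrictAnti fun n ↦ e (T (T^[n] x)) (T^[n] x) := by
    refine strictAnti_nat_of_succ_lt fun n ↦ ?_
    calc e (T (T^[n + 1] x)) (T^[n + 1] x)
        ≤ α / (1 - α) * e (T (T^[n] x)) (T^[n] x) := by
          simpa only [iterate_succ_apply'] using hT.displacement_map_le (by linarith) (T^[n] x)
      _ < e (T (T^[n] x)) (T^[n] x) := mul_lt_of_lt_one_left (hpos n) (div_one_sub_lt_one hα)
  exact Injective.of_comp (f := fun y ↦ e (T y) y) hanti.injective

lemma exists_forall_iterate_lt (hT : IsKannanWith α e T) (he : ∀ x y, 0 ≤ e x y)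
    (hα0 : 0 ≤ α) (hα : α < 1 / 2) (x : X) {ε : ℝ} (hε : 0 < ε) :
    ∃ N, ∀ m ≥ N, ∀ n ≥ N, e (T^[m] x) (T^[n] x) < ε := by
  obtain ⟨N, hN⟩ := eventually_atTop.1
    ((hT.tendsto_displacement_iterate he hα0 hα x).eventually_lt_const hε)
  refine ⟨N + 1, fun m hm n hn ↦ ?_⟩
  obtain ⟨m, rfl⟩ := Nat.exists_eq_add_one_of_ne_zero (Nat.ne_zero_of_lt hm)
  obtain ⟨n, rfl⟩ := Nat.exists_eq_add_one_of_ne_zero (Nat.ne_zero_of_lt hn)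
  have hm_lt := hN m (Nat.le_of_succ_le_succ hm)
  have hn_lt := hN n (Nat.le_of_succ_le_succ hn)
  calc e (T^[m + 1] x) (T^[n + 1] x)
      ≤ α * (e (T (T^[m] x)) (T^[m] x) + e (T (T^[n] x)) (T^[n] x)) := by
        simpa only [iterate_succ_apply'] using hT (T^[m] x) (T^[n] x)
    _ ≤ α * (ε + ε) := by gcongr
    _ < ε := by nlinarith

lemma isConeCauchy_iterate {d : X → X → ℝ} {φ : ℝ → ℝ}
    (hT : IsKannanWith α (fun x y ↦ φ (d x y)) T) (hd : ∀ x y, 0 ≤ d x y)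
    (hφ : IsAlteringDistance φ) (hα0 : 0 ≤ α) (hα : α < 1 / 2) (x : X) :
    IsConeCauchy (Ici 0) d fun n ↦ T^[n] x := by
  refine isConeCauchy_Ici_iff.2 fun c hc ↦ ?_
  obtain ⟨N, hN⟩ := hT.exists_forall_iterate_lt (fun _ _ ↦ hφ.nonneg (hd _ _)) hα0 hα x
    (hφ.pos hc)
  exact ⟨N, fun n hn k _ ↦
    hφ.monotoneOn.reflect_lt (hd _ _) hc.le (hN n hn (n + k) (by lia))⟩

end IsKannanWith

namespace IsGCRMetric

variable {X : Type*} {d : X → X → ℝ} {s : ℕ} {φ : ℝ → ℝ} {α : ℝ} {T : X → X}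

lemma nonneg (hd : IsGCRMetric (Ici 0) d s) (x y : X) : 0 ≤ d x y :=
  hd.1 x y

lemma eventually_le_of_injective (hd : IsGCRMetric (Ici 0) d s) {x : ℕ → X} (hx : Injective x)
    (y z : X) :
    ∀ᶠ n in atTop, d y z ≤ d y (x n) + s * d (x n) (x (n + 1)) + d (x (n + 1)) z := by
  have hne (w : X) : ∀ᶠ n in atTop, x n ≠ w :=
    Nat.cofinite_eq_atTop ▸ hx.tendsto_cofinite.eventually (eventually_cofinite_ne w)
  have hne_succ (w : X) : ∀ᶠ n in atTop, x (n + 1) ≠ w :=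
    (tendsto_add_atTop_nat 1).eventually (hne w)
  filter_upwards [hne y, hne z, hne_succ y, hne_succ z] with n hny hnz hny' hnz'
  simpa [ConeLe] using
    hd.2.2 y z (x n) (x (n + 1)) (hx.ne n.lt_succ_self.ne) hny hnz hny' hnz'

lemma isFixedPt_of_tendsto_iterate (hd : IsGCRMetric (Ici 0) d s) (hφ : IsAlteringDistance φ)
    (hα0 : 0 ≤ α) (hα : α < 1 / 2) (hT : IsKannanWith α (fun x y ↦ φ (d x y)) T) {x l : X}
    (hinj : Injective fun n ↦ T^[n] x) (hl : Tendsto (fun n ↦ d (T^[n] x) l) atTop (𝓝 0)) :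
    IsFixedPt T l := by
  have hsucc := (hT.isConeCauchy_iterate hd.nonneg hφ hα0 hα x).tendsto_succ hd.nonneg
  have herror : Tendsto (fun n ↦ s * d (T^[n] x) (T^[n + 1] x) + d (T^[n + 1] x) l)
      atTop (𝓝 0) := by
    simpa using (hsucc.const_mul (s : ℝ)).add (hl.comp (tendsto_add_atTop_nat 1))
  have hdisp := hT.tendsto_displacement_iterate (fun _ _ ↦ hφ.nonneg (hd.nonneg _ _)) hα0 hα x
  have hbound : Tendsto (fun n ↦ α * (φ (d (T l) l) + φ (d (T (T^[n] x)) (T^[n] x))))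
      atTop (𝓝 (α * φ (d (T l) l))) := by
    simpa using (hdisp.const_add _).const_mul α
  have hle : φ (d (T l) l) ≤ α * φ (d (T l) l) := by
    refine hφ.map_le_of_tendsto (hd.nonneg _ _) (fun n ↦ hd.nonneg (T l) (T^[n + 1] x))
      (herror.comp (tendsto_add_atTop_nat 1)) hbound ?_ ?_
    · filter_upwards [(tendsto_add_atTop_nat 1).eventually
        (hd.eventually_le_of_injective hinj (T l) l)] with n hn
      exact hn.trans_eq (add_assoc _ _ _)
    · refine .of_forall fun n ↦ ?_
      simpa only [iterate_succ_apply'] using hT l (T^[n] x)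
  have hnonneg := hφ.nonneg (hd.nonneg (T l) l)
  exact (hd.2.1 _ _).1 (hφ.eq_zero_of_le_zero (hd.nonneg _ _) (by nlinarith))

lemma exists_isFixedPt (hd : IsGCRMetric (Ici 0) d s) (hcomplete : WeaklyComplete (Ici 0) d)
    (hφ : IsAlteringDistance φ) (hα0 : 0 ≤ α) (hα : α < 1 / 2)
    (hT : IsKannanWith α (fun x y ↦ φ (d x y)) T) (x : X) : ∃ u, IsFixedPt T u := by
  by_contra! hno
  have hinj : Injective fun n ↦ T^[n] x := hT.injective_iterate hα fun n ↦
    hφ.pos ((hd.nonneg _ _).lt_of_ne' fun h ↦ hno _ ((hd.2.1 _ _).1 h))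
  obtain ⟨l, hl⟩ := hcomplete _ (hT.isConeCauchy_iterate hd.nonneg hφ hα0 hα x)
  exact hno l (hd.isFixedPt_of_tendsto_iterate hφ hα0 hα hT hinj
    ((convergesWeaklyTo_Ici_iff_tendsto hd.nonneg).1 hl))

end IsGCRMetric

theorem kannan_rpow_fixed_point_general {X : Type*} [Nonempty X] {d : X → X → ℝ} {s : ℕ}
    (hd : IsGCRMetric (Ici 0) d s) (hcomplete : WeaklyComplete (Ici 0) d)
    {φ : ℝ → ℝ} (hφ : IsAlteringDistance φ) {α : ℝ} (hα0 : 0 ≤ α) (hα : α < 1 / 2)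
    {T : X → X} (hT : IsKannanWith α (fun x y ↦ φ (d x y)) T) :
    ∃! u : X, T u = u := by
  obtain ⟨u, hu⟩ := hd.exists_isFixedPt hcomplete hφ hα0 hα hT (Classical.arbitrary X)
  have hself (x : X) : φ (d x x) = 0 := by rw [(hd.2.1 x x).2 rfl, hφ.map_zero]
  refine ⟨u, hu, fun v hv ↦ (hd.2.1 v u).1 ?_⟩
  exact hφ.eq_zero_of_le_zero (hd.nonneg v u) (hT.apply_le_zero_of_isFixedPt hself hv hu)

theorem kannan_rpow_fixed_point {X : Type*} [Nonempty X]
    (d : X → X → ℝ) (s : ℕ) (hs : 1 ≤ s)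
    (hd : IsGCRMetric (Set.Ici (0 : ℝ)) d s)
    (hcomplete : WeaklyComplete (Set.Ici (0 : ℝ)) d)
    (t : ℝ) (ht0 : 0 < t) (ht1 : t ≤ 1)
    (α : ℝ) (hα0 : 0 ≤ α) (hα1 : α < 1 / 2)
    (T : X → X)
    (hcontr : ∀ x y : X, d (T x) (T y) ^ t ≤ α * (d (T x) x ^ t + d (T y) y ^ t)) :
    ∃! u : X, T u = u :=
  kannan_rpow_fixed_point_general hd hcomplete (.rpow ht0) hα0 hα1 hcontr
end
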